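/- The Graev free abelian topological group A_G(s) over the convergent sequence s is not a pre-Mackey group: there is no locally quasi-convex group topology μ on the underlying group ℤ^(ℕ) of A_G(s) such that μ is compatible with the topology τ of A_G(s) and every locally quasi-convex group topology ν on ℤ^(ℕ) compatible with τ satisfies ν ≤ μ. -/

import Mathlib

open Filter Topology

noncomputable section

/-- `𝕊₊ = {z ∈ 𝕊 : Re z ≥ 0}`. -/
def SPlus : Set Circle := {z : Circle | 0 ≤ (z : ℂ).re}

/-- A character of an abelian group `G` is a homomorphism `G → 𝕊`. -/
def IsChar {G : Type*} [AddCommGroup G] (χ : G → Circle) : Prop :=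
  ∀ x y : G, χ (x + y) = χ x * χ y

/-- Two topologies on an abelian group `G` are *compatible* if they have the same
continuous characters `G → 𝕊`. -/
def Compatible {G : Type*} [AddCommGroup G] (t₁ t₂ : TopologicalSpace G) : Prop :=
  ∀ χ : G → Circle, IsChar χ →
    (@Continuous G Circle t₁ _ χ ↔ @Continuous G Circle t₂ _ χ)

/-- A subset `A` of a topological abelian group is *quasi-convex* if for every `g ∉ A`
there is a continuous character `χ` with `χ(A) ⊆ 𝕊₊` and `χ(g) ∉ 𝕊₊`. -/
def IsQuasiConvex {G : Type*} [AddCommGroup G] (t : TopologicalSpace G) (A : Set G) : Prop :=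
  ∀ g : G, g ∉ A → ∃ χ : G → Circle, IsChar χ ∧ @Continuous G Circle t _ χ ∧
    (∀ a ∈ A, χ a ∈ SPlus) ∧ χ g ∉ SPlus

/-- A topological abelian group is *locally quasi-convex* if it has a neighborhood base
at `0` consisting of quasi-convex sets. -/
def LocallyQuasiConvex {G : Type*} [AddCommGroup G] (t : TopologicalSpace G) : Prop :=
  ∀ U ∈ @nhds G t 0, ∃ V ∈ @nhds G t 0, V ⊆ U ∧ IsQuasiConvex t V

/-- The convergent sequence `s = {0} ∪ {1/n : n ∈ ℕ}` as a subspace of `ℝ`. -/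
def sSet : Set ℝ := {x : ℝ | x = 0 ∨ ∃ n : ℕ, 0 < n ∧ x = 1 / n}

/-- The natural map `s → ℤ^(ℕ)`, sending `0 ↦ 0` and `1/n ↦ e_n = single n 1`. -/
def sMap (x : sSet) : ℕ →₀ ℤ :=
  if (x : ℝ) = 0 then 0 else Finsupp.single ⌈(1 : ℝ) / (x : ℝ)⌉₊ 1

/-- The topology of the Graev free abelian topological group `A_G(s)`, i.e. the finest
group topology on `ℤ^(ℕ)` making `sMap : s → ℤ^(ℕ)` continuous.  In Mathlib's lattice of
(group) topologies `t ≤ s` means `t` is *finer* than `s`, so the finest such group topology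
is the `sInf` of the collection of all group topologies making `sMap` continuous; this
`sInf` itself makes `sMap` continuous, since `Continuous` into `t` means
`coinduced sMap _ ≤ t.toTopologicalSpace`, a condition preserved by `sInf`. -/
def tauGT : AddGroupTopology (ℕ →₀ ℤ) :=
  sInf {t : AddGroupTopology (ℕ →₀ ℤ) | @Continuous _ _ _ t.toTopologicalSpace sMap}

/-- The topology `τ` of `A_G(s)` on `ℤ^(ℕ)`. -/
def tau : TopologicalSpace (ℕ →₀ ℤ) := tauGT.toTopologicalSpace

lemma re_cont : Continuous fun z : Circle => (z : ℂ).re :=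
  Complex.continuous_re.comp continuous_subtype_val

lemma splus_pow {w : Circle} (h : ∀ j : ℕ, w ^ j ∈ SPlus) : w = 1 := by
  have key : ∀ k : ℕ, 2 ^ k * (1 - (w : ℂ).re) ≤ 1 - ((w ^ (2 ^ k) : Circle) : ℂ).re := by
    intro k
    induction k with
    | zero => simp
    | succ k ih =>
      set v := w ^ (2 ^ k) with hv
      have h1 : w ^ (2 ^ (k + 1)) = v * v := by rw [hv, pow_succ, pow_mul, sq]
      have h2 : 0 ≤ (v : ℂ).re := h _
      have h3 : (v : ℂ).re ^ 2 + (v : ℂ).im ^ 2 = 1 := by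
        have := Circle.normSq_coe v
        rw [Complex.normSq_apply] at this
        nlinarith
      rw [h1, Circle.coe_mul, Complex.mul_re, pow_succ]
      have h4 : (v : ℂ).re ≤ 1 := by nlinarith [sq_nonneg (v : ℂ).im]
      nlinarith
  have hn : (w : ℂ).re ^ 2 + (w : ℂ).im ^ 2 = 1 := by
    have := Circle.normSq_coe w
    rw [Complex.normSq_apply] at this
    nlinarith
  have hre : (w : ℂ).re = 1 := by
    by_contra hne
    have hlt : 0 < 1 - (w : ℂ).re := by
      have : (w : ℂ).re ≤ 1 := by nlinarith [sq_nonneg (w : ℂ).im]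
      rcases this.lt_or_eq with h | h
      · linarith
      · exact absurd h hne
    obtain ⟨k, hk⟩ := pow_unbounded_of_one_lt (1 / (1 - (w : ℂ).re)) (one_lt_two)
    rw [div_lt_iff₀ hlt] at hk
    have := key k
    have h2 : 0 ≤ ((w ^ (2 ^ k) : Circle) : ℂ).re := h _
    linarith
  have him : (w : ℂ).im = 0 := by
    rw [hre] at hn
    nlinarith
  ext
  apply Complex.ext <;> simp [hre, him]

lemma splus_closed : IsClosed SPlus := by
  unfold SPlus
  exact isClosed_le continuous_const re_cont

lemma splus_nhds : SPlus ∈ 𝓝 (1 : Circle) := by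
  have : {z : Circle | 0 < (z : ℂ).re} ∈ 𝓝 (1 : Circle) :=
    (isOpen_lt continuous_const re_cont).mem_nhds
      (by simp)
  filter_upwards [this] with z hz
  exact le_of_lt hz

/-- small arcs -/
def arc (m : ℕ) : Set Circle := {w | ∀ j ≤ m, w ^ j ∈ SPlus}

lemma arc_closed (m : ℕ) : IsClosed (arc m) := by
  have : arc m = ⋂ j : ℕ, ⋂ _ : j ≤ m, (fun w : Circle => w ^ j) ⁻¹' SPlus := by
    ext; simp [arc]
  rw [this]
  exact isClosed_iInter fun j => isClosed_iInter fun _ => splus_closed.preimage (continuous_pow j)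

lemma arc_nhds (m : ℕ) : arc m ∈ 𝓝 (1 : Circle) := by
  have : ∀ᶠ w in 𝓝 (1 : Circle), ∀ j ∈ Set.Iic m, w ^ j ∈ SPlus := by
    rw [Filter.eventually_all_finite (Set.finite_Iic m)]
    intro j _
    have h : Tendsto (fun w : Circle => w ^ j) (𝓝 1) (𝓝 (1 ^ j)) := (continuous_pow j).tendsto 1
    rw [one_pow] at h
    exact h splus_nhds
  exact this

lemma arc_basis {V : Set Circle} (hV : V ∈ 𝓝 (1 : Circle)) : ∃ m, arc m ⊆ V := by
  refine exists_subset_nhds_of_isCompact (V := arc) ?_ (fun i => (arc_closed i).isCompact) ?_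
  · intro a b
    exact ⟨max a b, fun w hw j hj => hw j (hj.trans (le_max_left _ _)),
      fun w hw j hj => hw j (hj.trans (le_max_right _ _))⟩
  · intro x hx
    have : x = 1 := splus_pow fun j => (Set.mem_iInter.1 hx j) j le_rfl
    rw [this]; exact hV

/-- rotation-type property -/
def Good (z : Circle) : Prop :=
  ∀ d : ℕ, 0 < d → ∀ V ∈ 𝓝 (1 : Circle), ∃ j : ℤ, z ^ (1 + (d : ℤ) * j) ∈ V

lemma good_of_irrational {θ : ℝ} (h : Irrational θ) :
    Good (AddCircle.toCircle (θ : AddCircle (1 : ℝ))) := by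
  intro d hd V hV
  have h1 : Irrational ((d * θ : ℝ) / 1) := by
    rw [div_one]; exact h.natCast_mul hd.ne'
  have h2 := AddCircle.denseRange_zsmul_coe_iff.2 h1
  have hc : Continuous fun x : AddCircle (1 : ℝ) => AddCircle.toCircle ((θ : AddCircle (1:ℝ)) + x) :=
    AddCircle.continuous_toCircle.comp (continuous_const_add _)
  obtain ⟨W, hWV, hWo, hW1⟩ := mem_nhds_iff.1 hV
  obtain ⟨j, hj⟩ := h2.exists_mem_open (hWo.preimage hc) ⟨-(θ : AddCircle (1:ℝ)), by simpa using hW1⟩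
  refine ⟨j, hWV ?_⟩
  have : (1 + (d : ℤ) * j) • (θ : AddCircle (1:ℝ)) = θ + j • ((d * θ : ℝ) : AddCircle (1:ℝ)) := by
    rw [add_smul, one_smul, mul_comm, mul_smul]
    congr 2
    rw [← nsmul_eq_mul, AddCircle.coe_nsmul, natCast_zsmul]
  rw [← AddCircle.toCircle_zsmul, this]
  exact hj

lemma exists_good : ∃ z : Circle, Good z ∧ Good (-z) := by
  refine ⟨_, good_of_irrational irrational_sqrt_two, ?_⟩
  have h : Irrational (√2 + ((1/2 : ℚ) : ℝ)) := irrational_sqrt_two.add_ratCast _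
  convert good_of_irrational h using 1
  rw [AddCircle.toCircle_apply_mk, AddCircle.toCircle_apply_mk, mul_add, Circle.exp_add]
  have : Circle.exp (2 * Real.pi / 1 * ((1/2 : ℚ) : ℝ)) = -1 := by
    ext
    have : (2 * Real.pi / 1 * ((1/2 : ℚ) : ℝ)) = Real.pi := by push_cast; ring
    rw [this]
    simp
  rw [this]; simp

/-- additive hom from a character -/
def charHom {G : Type*} [AddCommGroup G] {χ : G → Circle} (h : IsChar χ) : G →+ Additive Circle :=
  AddMonoidHom.mk' (fun x => Additive.ofMul (χ x)) fun x y => by rw [h]; rfl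

lemma isChar_zero {G : Type*} [AddCommGroup G] {χ : G → Circle} (h : IsChar χ) : χ 0 = 1 :=
  map_zero (charHom h)

lemma isChar_zsmul {G : Type*} [AddCommGroup G] {χ : G → Circle} (h : IsChar χ) (n : ℤ) (x : G) :
    χ (n • x) = χ x ^ n :=
  map_zsmul (charHom h) n x

lemma isChar_sum {G ι : Type*} [AddCommGroup G] {χ : G → Circle} (h : IsChar χ) (s : Finset ι)
    (f : ι → G) : χ (∑ i ∈ s, f i) = ∏ i ∈ s, χ (f i) :=
  map_sum (charHom h) f s

/-- topology induced by a character -/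
def indTop {χ : (ℕ →₀ ℤ) → Circle} (h : IsChar χ) : AddGroupTopology (ℕ →₀ ℤ) where
  toTopologicalSpace := TopologicalSpace.induced (charHom h) inferInstance
  toIsTopologicalAddGroup := topologicalAddGroup_induced (charHom h)

lemma sMap_continuous : @Continuous _ _ _ tau sMap := by
  unfold tau tauGT
  rw [AddGroupTopology.toTopologicalSpace_sInf, continuous_sInf_rng]
  rintro _ ⟨t, ht, rfl⟩
  exact ht

lemma tau_char_iff {χ : (ℕ →₀ ℤ) → Circle} (h : IsChar χ)
    (hs : Continuous fun x => χ (sMap x)) : @Continuous _ _ tau _ χ := by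
  have h1 : tauGT ≤ indTop h := by
    apply sInf_le
    show @Continuous _ _ _ (TopologicalSpace.induced (charHom h) inferInstance) sMap
    rw [continuous_induced_rng]
    exact hs
  have h2 : tau ≤ TopologicalSpace.induced χ inferInstance := h1
  exact continuous_iff_le_induced.2 h2

lemma sMap_inv (n : ℕ) (hn : 0 < n) (x : sSet) (hx : (x : ℝ) = 1 / n) :
    sMap x = Finsupp.single n 1 := by
  have : (n : ℝ) ≠ 0 := by exact_mod_cast hn.ne'
  unfold sMap
  rw [hx, if_neg (by positivity), one_div_one_div, Nat.ceil_natCast]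

lemma comp_sMap_continuous {χ : (ℕ →₀ ℤ) → Circle} (h : IsChar χ)
    (ht : Tendsto (fun n : ℕ => χ (Finsupp.single n 1)) atTop (𝓝 1)) :
    Continuous fun x => χ (sMap x) := by
  rw [continuous_iff_continuousAt]
  rintro ⟨x, hx⟩
  by_cases hx0 : x = 0
  · subst hx0
    have h0 : χ (sMap ⟨0, hx⟩) = 1 := by simp [sMap, isChar_zero h]
    rw [ContinuousAt, h0]
    intro V hV
    obtain ⟨N, hN⟩ := (mem_atTop_sets.1 (ht hV))
    have hnear : ∀ᶠ y : sSet in 𝓝 ⟨0, hx⟩, (y : ℝ) < 1 / (N + 1) := by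
      have : Tendsto (fun y : sSet => (y : ℝ)) (𝓝 ⟨0, hx⟩) (𝓝 0) :=
        continuous_subtype_val.tendsto _
      exact this.eventually_lt_const (by positivity)
    refine mem_map.2 ?_
    filter_upwards [hnear] with y hy
    rcases y.2 with hy0 | ⟨n, hn, hyn⟩
    · show χ (sMap y) ∈ V
      have : sMap y = 0 := by simp [sMap, hy0]
      rw [this, isChar_zero h]; exact mem_of_mem_nhds hV
    · show χ (sMap y) ∈ V
      rw [sMap_inv n hn y hyn]
      apply hN
      rw [hyn, one_div_lt_one_div (by exact_mod_cast hn) (by positivity)] at hy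
      have : N + 1 < n := by exact_mod_cast hy
      omega
  · rcases hx with h0 | ⟨n, hn, hxn⟩
    · exact absurd h0 hx0
    have hv : Tendsto (fun y : sSet => (y : ℝ)) (𝓝 ⟨x, Or.inr ⟨n, hn, hxn⟩⟩) (𝓝 x) :=
      continuous_subtype_val.tendsto _
    have hi := hv.inv₀ hx0
    have hxi : x⁻¹ = n := by rw [hxn]; simp
    rw [hxi] at hi
    have e1 := hi.eventually_lt_const (show (n : ℝ) < n + 1 by linarith)
    have e2 := hi.eventually_const_lt (show (n : ℝ) - 1 < n by linarith)
    have e3 := hv.eventually_ne hx0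
    refine ContinuousAt.congr (f := fun _ => χ (Finsupp.single n 1)) continuousAt_const ?_
    filter_upwards [e1, e2, e3] with y h1 h2 h3
    rcases y.2 with hy0 | ⟨m, hm, hym⟩
    · exact absurd hy0 h3
    rw [hym] at h1 h2
    simp only [one_div, inv_inv] at h1 h2
    have a1 : m < n + 1 := by exact_mod_cast h1
    have a2 : n < m + 1 := by
      have : (n : ℝ) < m + 1 := by linarith
      exact_mod_cast this
    have : m = n := by omega
    subst this
    rw [sMap_inv m hm y hym]

lemma tau_char_tendsto {χ : (ℕ →₀ ℤ) → Circle} (h : IsChar χ) (hc : @Continuous _ _ tau _ χ) :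
    Tendsto (fun n : ℕ => χ (Finsupp.single n 1)) atTop (𝓝 1) := by
  have hcs : Continuous fun x => χ (sMap x) := @Continuous.comp _ _ _ _ tau _ _ _ hc sMap_continuous
  let y : ℕ → sSet := fun n => ⟨1 / ((n + 1 : ℕ) : ℝ), Or.inr ⟨n + 1, n.succ_pos, rfl⟩⟩
  let o : sSet := ⟨0, Or.inl rfl⟩
  have hy : Tendsto y atTop (𝓝 o) := by
    rw [tendsto_subtype_rng]
    have := tendsto_one_div_add_atTop_nhds_zero_nat (𝕜 := ℝ)
    simpa [y, o] using this
  have h1 := (hcs.tendsto o).comp hy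
  have h2 : χ (sMap o) = 1 := by simp [sMap, o, isChar_zero h]
  rw [h2] at h1
  rw [← tendsto_add_atTop_iff_nat 1]
  refine h1.congr fun n => ?_
  simp only [Function.comp]
  rw [sMap_inv (n + 1) n.succ_pos (y n) rfl]

/-- index set: `τ`-continuous characters -/
def Idx : Type := {χ : (ℕ →₀ ℤ) → Circle // IsChar χ ∧ @Continuous _ _ tau _ χ}

/-- the map defining the topology -/
def Phi (z : Circle) (x : ℕ →₀ ℤ) : (Idx → Circle) × (UniformFun ℕ Circle) :=
  (fun i => i.1 x, UniformFun.ofFun fun k => z ^ (x k))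

/-- hom version -/
def PhiHom (z : Circle) : (ℕ →₀ ℤ) →+ Additive ((Idx → Circle) × (UniformFun ℕ Circle)) :=
  AddMonoidHom.mk' (fun x => Additive.ofMul (Phi z x)) fun x y => by
    show Phi z (x + y) = Phi z x * Phi z y
    refine Prod.ext ?_ ?_
    · funext i
      exact i.2.1 x y
    · funext k
      exact zpow_add z (x k) (y k)

/-- the topology -/
def nu (z : Circle) : AddGroupTopology (ℕ →₀ ℤ) where
  toTopologicalSpace := TopologicalSpace.induced (PhiHom z) inferInstance
  toIsTopologicalAddGroup := topologicalAddGroup_induced (PhiHom z)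

lemma nu_eq (z : Circle) : (nu z).toTopologicalSpace = TopologicalSpace.induced (Phi z) inferInstance :=
  rfl

lemma Phi_zero (z : Circle) : Phi z 0 = 1 := map_zero (PhiHom z)

lemma Phi_cont (z : Circle) : @Continuous _ _ (nu z).toTopologicalSpace _ (Phi z) :=
  continuous_induced_dom

lemma nu_cont_left (z : Circle) (i : Idx) : @Continuous _ _ (nu z).toTopologicalSpace _ i.1 := by
  have h : Continuous fun p : (Idx → Circle) × (UniformFun ℕ Circle) => p.1 i :=
    (continuous_apply i).comp continuous_fst
  have hh := @Continuous.comp _ _ _ (nu z).toTopologicalSpace _ _ _ _ h (Phi_cont z)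
  exact hh

lemma nu_cont_right (z : Circle) (k : ℕ) :
    @Continuous _ _ (nu z).toTopologicalSpace _ (fun x : ℕ →₀ ℤ => z ^ (x k)) := by
  have h : Continuous fun p : (Idx → Circle) × (UniformFun ℕ Circle) => UniformFun.toFun p.2 k :=
    (UniformFun.uniformContinuous_eval Circle k).continuous.comp continuous_snd
  have hh := @Continuous.comp _ _ _ (nu z).toTopologicalSpace _ _ _ _ h (Phi_cont z)
  exact hh

lemma nu_mem (z : Circle) {V : Set Circle} (hV : V ∈ 𝓝 (1 : Circle)) :
    {x : ℕ →₀ ℤ | ∀ k, z ^ (x k) ∈ V} ∈ @nhds _ (nu z).toTopologicalSpace 0 := by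
  rw [nu_eq, nhds_induced, Phi_zero]
  refine ⟨Prod.snd ⁻¹' {f : UniformFun ℕ Circle | ∀ k, UniformFun.toFun f k ∈ V}, ?_, ?_⟩
  · apply continuous_snd.tendsto (1 : (Idx → Circle) × (UniformFun ℕ Circle))
    exact (UniformFun.hasBasis_nhds_one (α := ℕ) (G := Circle)).mem_of_mem hV
  · intro x hx k
    exact hx k

lemma nu_basis (z : Circle) {U : Set (ℕ →₀ ℤ)} (hU : U ∈ @nhds _ (nu z).toTopologicalSpace 0) :
    ∃ F : Set Idx, F.Finite ∧ ∃ m : ℕ,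
      {x : ℕ →₀ ℤ | (∀ i ∈ F, i.1 x ∈ arc m) ∧ ∀ k, z ^ (x k) ∈ arc m} ⊆ U := by
  rw [nu_eq, nhds_induced, Phi_zero] at hU
  obtain ⟨W, hW, hWU⟩ := hU
  rw [show (1 : (Idx → Circle) × (UniformFun ℕ Circle)) = (1, 1) from rfl, nhds_prod_eq,
    mem_prod_iff] at hW
  obtain ⟨A, hA, B, hB, hAB⟩ := hW
  rw [nhds_pi, Filter.mem_pi] at hA
  obtain ⟨F, hF, t, ht, htA⟩ := hA
  obtain ⟨V, hV, hVB⟩ := (UniformFun.hasBasis_nhds_one (α := ℕ) (G := Circle)).mem_iff.1 hB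
  have hVt : V ∩ ⋂ i ∈ F, t i ∈ 𝓝 (1 : Circle) :=
    inter_mem hV ((biInter_mem hF).2 fun i _ => ht i)
  obtain ⟨m, hm⟩ := arc_basis hVt
  refine ⟨F, hF, m, ?_⟩
  rintro x ⟨h1, h2⟩
  apply hWU
  apply hAB
  refine ⟨htA fun i hi => ?_, hVB fun k => ?_⟩
  · exact Set.mem_iInter₂.1 (hm (h1 i hi)).2 i hi
  · exact (hm (h2 k)).1

lemma nu_lqc (z : Circle) : LocallyQuasiConvex (nu z).toTopologicalSpace := by
  intro U hU
  obtain ⟨F, hF, m, hm⟩ := nu_basis z hU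
  refine ⟨_, ?_, hm, ?_⟩
  · refine inter_mem ?_ (nu_mem z (arc_nhds m))
    refine (Filter.eventually_all_finite hF).2 fun i _ => ?_
    have := (@Continuous.tendsto _ _ (nu z).toTopologicalSpace _ _ (nu_cont_left z i) 0)
    rw [isChar_zero i.2.1] at this
    exact this (arc_nhds m)
  · intro g hg
    rw [Set.mem_ofPred_eq, not_and_or] at hg
    rcases hg with hg | hg
    · push Not at hg
      obtain ⟨i, hi, hg⟩ := hg
      unfold arc at hg
      rw [Set.mem_ofPred_eq] at hg
      push Not at hg
      obtain ⟨j, hj, hg⟩ := hg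
      refine ⟨fun x => i.1 x ^ j, ?_, ?_, ?_, hg⟩
      · intro x y
        simp only [i.2.1 x y, mul_pow]
      · exact @Continuous.comp _ _ _ (_) _ _ _ _ (continuous_pow j) (nu_cont_left z i)
      · intro a ha
        exact ha.1 i hi j hj
    · push Not at hg
      obtain ⟨k, hg⟩ := hg
      unfold arc at hg
      rw [Set.mem_ofPred_eq] at hg
      push Not at hg
      obtain ⟨j, hj, hg⟩ := hg
      refine ⟨fun x => (z ^ (x k)) ^ j, ?_, ?_, ?_, hg⟩
      · intro x y
        simp only [Finsupp.add_apply, zpow_add, mul_pow]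
      · exact @Continuous.comp _ _ _ (_) _ _ _ _ (continuous_pow j) (nu_cont_right z k)
      · intro a ha
        exact ha.2 k j hj

lemma nu_char_tendsto {z : Circle} (hz : Good z) {χ : (ℕ →₀ ℤ) → Circle} (h : IsChar χ)
    (hc : @Continuous _ _ (nu z).toTopologicalSpace _ χ) :
    Tendsto (fun n : ℕ => χ (Finsupp.single n 1)) atTop (𝓝 1) := by
  by_contra hnt
  obtain ⟨V, hV, hfr⟩ := (not_tendsto_iff_exists_frequently_notMem).1 hnt
  obtain ⟨O, hOV, hOo, hO1⟩ := mem_nhds_iff.1 hV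
  have hfr' : ∃ᶠ n : ℕ in atTop, χ (Finsupp.single n 1) ∈ Oᶜ := hfr.mono fun n hn h => hn (hOV h)
  obtain ⟨w, hwO, φ, hφ, hlim⟩ := (hOo.isClosed_compl.isCompact).tendsto_subseq' hfr'
  apply hwO
  suffices w = 1 by rw [this]; exact hO1
  have hU : χ ⁻¹' SPlus ∈ @nhds _ (nu z).toTopologicalSpace 0 := by
    have := (@Continuous.tendsto _ _ (nu z).toTopologicalSpace _ _ hc 0)
    rw [isChar_zero h] at this
    exact this splus_nhds
  obtain ⟨F, hF, m, hm⟩ := nu_basis z hU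
  have key : ∀ n : ℤ, z ^ n ∈ arc m → w ^ n = 1 := by
    intro n hn
    apply splus_pow
    intro r
    let y : ℕ → (ℕ →₀ ℤ) := fun k => n • ∑ i ∈ Finset.range r, Finsupp.single (φ (k + i)) (1 : ℤ)
    have hy : ∀ {ψ : (ℕ →₀ ℤ) → Circle} (_ : IsChar ψ) (v : Circle),
        Tendsto (fun k => ψ (Finsupp.single (φ k) 1)) atTop (𝓝 v) →
        Tendsto (fun k => ψ (y k)) atTop (𝓝 ((v ^ n) ^ r)) := by
      intro ψ hψ v hv
      have h1 : ∀ k, ψ (y k) = (∏ i ∈ Finset.range r, ψ (Finsupp.single (φ (k + i)) 1)) ^ n := by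
        intro k
        simp only [y]
        rw [isChar_zsmul hψ, isChar_sum hψ]
      simp only [h1]
      have h2 : (v ^ n) ^ r = (∏ i ∈ Finset.range r, v) ^ n := by
        rw [Finset.prod_const, Finset.card_range, ← zpow_natCast, ← zpow_natCast, ← zpow_mul,
          ← zpow_mul, mul_comm]
      rw [h2]
      have h3 := tendsto_finsetProd (Finset.range r) (fun i _ => hv.comp (tendsto_add_atTop_nat i))
      exact ((continuous_zpow n).tendsto _).comp h3
    have hlim' := hy h w hlim
    refine splus_closed.mem_of_tendsto hlim' ?_
    have hF' : ∀ᶠ k in atTop, ∀ i ∈ F, i.1 (y k) ∈ arc m := by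
      rw [Filter.eventually_all_finite hF]
      intro i _
      have := hy i.2.1 1 ((tau_char_tendsto i.2.1 i.2.2).comp hφ.tendsto_atTop)
      rw [one_zpow, one_pow] at this
      exact this (arc_nhds m)
    filter_upwards [hF'] with k hk
    refine hm ⟨hk, fun l => ?_⟩
    have hyl : y k l = n * ((Finset.range r).filter fun i => φ (k + i) = l).card := by
      simp only [y, Finsupp.smul_apply, Finsupp.finsetSum_apply, Finsupp.single_apply, smul_eq_mul]
      rw [Finset.sum_boole]
    have hcard : ((Finset.range r).filter fun i => φ (k + i) = l).card ≤ 1 := by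
      rw [Finset.card_le_one]
      intro a ha b hb
      have := hφ.injective ((Finset.mem_filter.1 ha).2.trans (Finset.mem_filter.1 hb).2.symm)
      omega
    rw [hyl]
    interval_cases hq : ((Finset.range r).filter fun i => φ (k + i) = l).card
    · simpa using mem_of_mem_nhds (arc_nhds m)
    · simpa using hn
  obtain ⟨j, hj⟩ := hz 2 two_pos _ (arc_nhds m)
  have h1 := key _ hj
  set n : ℤ := 1 + ((2 : ℕ) : ℤ) * j with hn
  have hn0 : 0 < n.natAbs := by
    have : n ≠ 0 := by push_cast at hn; omega
    exact Int.natAbs_pos.2 this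
  obtain ⟨j', hj'⟩ := hz n.natAbs hn0 _ (arc_nhds m)
  have h2 := key _ hj'
  have h3 : w ^ ((n.natAbs : ℕ) : ℤ) = 1 := by
    rcases Int.natAbs_eq n with h | h
    · rw [← h]; exact h1
    · rw [show ((n.natAbs : ℕ) : ℤ) = -n by omega, zpow_neg, h1, inv_one]
  rw [zpow_add, zpow_mul, h3, one_zpow, zpow_one, mul_one] at h2
  exact h2

lemma nu_compat {z : Circle} (hz : Good z) : Compatible (nu z).toTopologicalSpace tau := by
  intro χ h
  constructor
  · intro hc
    exact tau_char_iff h (comp_sMap_continuous h (nu_char_tendsto hz h hc))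
  · intro hc
    exact nu_cont_left z ⟨χ, h, hc⟩

/-- The group `A_G(s)` is not a pre-Mackey group: there is no locally quasi-convex group
topology `μ` on `ℤ^(ℕ)` compatible with `τ` such that every locally quasi-convex group
topology `ν` compatible with `τ` is coarser than `μ` (i.e. every `ν`-open set is `μ`-open). -/
theorem A_G_s_not_preMackey :
    ¬ ∃ μ : AddGroupTopology (ℕ →₀ ℤ),
        LocallyQuasiConvex μ.toTopologicalSpace ∧
        Compatible μ.toTopologicalSpace tau ∧
        ∀ ν : AddGroupTopology (ℕ →₀ ℤ),
          LocallyQuasiConvex ν.toTopologicalSpace → Compatible ν.toTopologicalSpace tau →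
          ∀ U : Set (ℕ →₀ ℤ), IsOpen[ν.toTopologicalSpace] U → IsOpen[μ.toTopologicalSpace] U := by
  rintro ⟨μ, -, hμ, hmax⟩
  obtain ⟨z, hz, hz'⟩ := exists_good
  let V : Set Circle := {w | 0 < (w : ℂ).re}
  have hV : V ∈ 𝓝 (1 : Circle) :=
    (isOpen_lt continuous_const re_cont).mem_nhds
      (by simp)
  have hle : ∀ {z : Circle}, Good z →
      {x : ℕ →₀ ℤ | ∀ k, z ^ (x k) ∈ V} ∈ @nhds _ μ.toTopologicalSpace 0 := by
    intro z hz
    have h1 : μ.toTopologicalSpace ≤ (nu z).toTopologicalSpace := hmax _ (nu_lqc z) (nu_compat hz)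
    exact nhds_mono h1 (nu_mem z hV)
  have hE := inter_mem (hle hz) (hle hz')
  let χ : (ℕ →₀ ℤ) → Circle := fun x => x.prod fun _ n => (-1 : Circle) ^ n
  have hχ : IsChar χ := fun x y =>
    Finsupp.prod_add_index' (fun _ => zpow_zero _) (fun _ a b => zpow_add _ a b)
  have hχ1 : ∀ n, χ (Finsupp.single n 1) = -1 := by
    intro n
    simp [χ]
  have hker : ∀ x ∈ {x : ℕ →₀ ℤ | ∀ k, z ^ (x k) ∈ V} ∩ {x : ℕ →₀ ℤ | ∀ k, (-z) ^ (x k) ∈ V},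
      χ x = 1 := by
    rintro x ⟨h1, h2⟩
    apply Finset.prod_eq_one
    intro k _
    rcases Int.even_or_odd (x k) with he | ho
    · exact he.neg_one_zpow
    · exfalso
      have a := h1 k
      have b := h2 k
      rw [ho.neg_zpow] at b
      simp only [V, Set.mem_ofPred_eq] at a b
      have : ((-(z ^ (x k)) : Circle) : ℂ).re = - ((z ^ (x k) : Circle) : ℂ).re := by
        rw [Circle.coe_neg, Complex.neg_re]
      linarith
  have hχc : @Continuous _ _ μ.toTopologicalSpace _ χ := by
    letI := μ.toTopologicalSpace
    haveI := μ.toIsTopologicalAddGroup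
    have : Continuous (charHom hχ) := by
      apply continuous_of_continuousAt_zero
      rw [ContinuousAt, map_zero]
      refine tendsto_const_nhds.congr' ?_
      filter_upwards [hE] with x hx
      exact (hker x hx).symm
    exact this
  have ht := tau_char_tendsto hχ ((hμ χ hχ).1 hχc)
  simp only [hχ1] at ht
  have := tendsto_nhds_unique ht tendsto_const_nhds
  have := congrArg (fun c : Circle => (c : ℂ).re) this
  norm_num at this

end
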